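/- For every real x with 0 < x < π/2, the inequality (x / sin x)² + x / tan x < 2 + (2/45) x³ tan x holds. -/

import Mathlib

open Real

/-!
Multiplying by `sin² x · cos x > 0`, the claim becomes `G x > 0` for
`G = (2/45) x³ sin³ x + 2 sin² x cos x - x² cos x - x cos² x sin x`.
Multiple-angle formulas make `G` linear in `sin x`, `sin 3x`, `cos x`, `cos 3x`:
`G = (x³/30 - x/4) sin x - (x³/90 + x/4) sin 3x + (1/2 - x²) cos x - (1/2) cos 3x`.
On `(0, π/2)` the coefficients of `sin x`, `sin 3x`, `cos 3x` are negative, while `1/2` and `-x²`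
are treated separately as coefficients of `cos x`. Replacing each function by a Taylor polynomial
bounding it on the appropriate side (`taylor_bounds`) gives a lower bound `x⁸ Q(x²)`, where `Q` has
degree four, positive constant term `2/315` and all other coefficients negative. Hence `Q` is
decreasing on `[0, ∞)`, and it is still positive at `5/2 > (π/2)²`.
-/

/-- The Taylor polynomial of `sin` at `0` with `n` nonzero terms. -/
noncomputable def sinTaylor (n : ℕ) (y : ℝ) : ℝ :=
  ∑ k ∈ Finset.range n, (-1) ^ k * y ^ (2 * k + 1) / (2 * k + 1).factorial

/-- The Taylor polynomial of `cos` at `0` with `n` nonzero terms. -/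
noncomputable def cosTaylor (n : ℕ) (y : ℝ) : ℝ :=
  ∑ k ∈ Finset.range n, (-1) ^ k * y ^ (2 * k) / (2 * k).factorial

lemma hasDerivAt_sinTaylor (n : ℕ) (y : ℝ) :
    HasDerivAt (sinTaylor n) (cosTaylor n y) y := by
  unfold sinTaylor cosTaylor
  refine HasDerivAt.fun_sum fun k _ => ?_
  have h := ((hasDerivAt_pow (2 * k + 1) y).const_mul ((-1 : ℝ) ^ k)).div_const
    ((2 * k + 1).factorial : ℝ)
  refine h.congr_deriv ?_
  rw [Nat.factorial_succ]
  have h1 : ((2 * k).factorial : ℝ) ≠ 0 := by positivity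
  have h2 : (2 * (k : ℝ) + 1) ≠ 0 := by positivity
  push_cast
  field_simp

lemma hasDerivAt_cosTaylor (n : ℕ) (y : ℝ) :
    HasDerivAt (cosTaylor (n + 1)) (-sinTaylor n y) y := by
  have e : cosTaylor (n + 1) = fun y : ℝ =>
      (∑ k ∈ Finset.range n, (-1 : ℝ) ^ (k + 1) * y ^ (2 * k + 2) / (2 * k + 2).factorial) + 1 := by
    funext z
    simp [cosTaylor, Finset.sum_range_succ', mul_add]
  rw [e]
  unfold sinTaylor
  rw [← Finset.sum_neg_distrib]
  refine HasDerivAt.add_const _ (HasDerivAt.fun_sum fun k _ => ?_)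
  have h := ((hasDerivAt_pow (2 * k + 2) y).const_mul ((-1 : ℝ) ^ (k + 1))).div_const
    ((2 * k + 2).factorial : ℝ)
  refine h.congr_deriv ?_
  rw [Nat.factorial_succ (2 * k + 1)]
  have h1 : ((2 * k + 1).factorial : ℝ) ≠ 0 := by positivity
  have h2 : (2 * (k : ℝ) + 1 + 1) ≠ 0 := by positivity
  have h3 : 2 * k + 2 - 1 = 2 * k + 1 := by omega
  rw [h3]
  push_cast
  field_simp
  ring

lemma nonneg_of_hasDerivAt_nonneg {f f' : ℝ → ℝ} (hf : ∀ y, HasDerivAt f (f' y) y)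
    (h0 : f 0 = 0) (hf' : ∀ y, 0 ≤ y → 0 ≤ f' y) (y : ℝ) (hy : 0 ≤ y) : 0 ≤ f y := by
  have hm : MonotoneOn f (Set.Ici 0) := by
    refine monotoneOn_of_hasDerivWithinAt_nonneg (convex_Ici 0)
      (fun z _ => (hf z).continuousAt.continuousWithinAt)
      (fun z _ => (hf z).hasDerivWithinAt) fun z hz => ?_
    rw [interior_Ici] at hz
    exact hf' z (le_of_lt hz)
  have := hm (Set.mem_Ici.2 le_rfl) (Set.mem_Ici.2 hy) hy
  rwa [h0] at this

/-- On `[0, ∞)` the Taylor polynomials of `cos` and `sin` with `n + 1` nonzero terms are upper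
bounds for even `n` and lower bounds for odd `n`. Each bound follows from the preceding one by
integration, starting from `cos ≤ 1`. -/
lemma taylor_bounds (n : ℕ) :
    (∀ y : ℝ, 0 ≤ y → 0 ≤ (-1) ^ n * (cosTaylor (n + 1) y - cos y)) ∧
    (∀ y : ℝ, 0 ≤ y → 0 ≤ (-1) ^ n * (sinTaylor (n + 1) y - sin y)) := by
  have cos_to_sin : ∀ m : ℕ, (∀ y : ℝ, 0 ≤ y → 0 ≤ (-1) ^ m * (cosTaylor (m + 1) y - cos y)) →
      ∀ y : ℝ, 0 ≤ y → 0 ≤ (-1) ^ m * (sinTaylor (m + 1) y - sin y) := by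
    intro m hm
    refine nonneg_of_hasDerivAt_nonneg
      (fun y => ((hasDerivAt_sinTaylor (m + 1) y).sub (hasDerivAt_sin y)).const_mul _) ?_ hm
    simp [sinTaylor]
  have key : ∀ y : ℝ, 0 ≤ y → 0 ≤ (-1) ^ n * (cosTaylor (n + 1) y - cos y) := by
    induction n with
    | zero =>
      intro y _
      simp [cosTaylor, cos_le_one]
    | succ m ih =>
      refine nonneg_of_hasDerivAt_nonneg
        (fun y => ((hasDerivAt_cosTaylor (m + 1) y).sub (hasDerivAt_cos y)).const_mul _) ?_ ?_
      · simp [cosTaylor, Finset.sum_range_succ']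
      · intro y hy
        have := cos_to_sin m ih y hy
        rw [pow_succ]
        linarith
  exact ⟨key, cos_to_sin n key⟩

lemma cleared_pos (x : ℝ) (hx0 : 0 < x) (hx : x < π / 2) :
    0 < 2 / 45 * x ^ 3 * sin x ^ 3 + 2 * sin x ^ 2 * cos x - x ^ 2 * cos x
      - x * cos x ^ 2 * sin x := by
  have ht : x ^ 2 < 5 / 2 := by
    have := pi_lt_d2
    nlinarith
  have hs := (taylor_bounds 4).2 x hx0.le
  have hs3 := (taylor_bounds 6).2 (3 * x) (by positivity)
  have hcl := (taylor_bounds 5).1 x hx0.le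
  have hcu := (taylor_bounds 4).1 x hx0.le
  have hc3 := (taylor_bounds 6).1 (3 * x) (by positivity)
  have id : 2 / 45 * x ^ 3 * sin x ^ 3 + 2 * sin x ^ 2 * cos x - x ^ 2 * cos x
      - x * cos x ^ 2 * sin x = (x ^ 3 / 30 - x / 4) * sin x - (x ^ 3 / 90 + x / 4) * sin (3 * x)
        + cos x / 2 - x ^ 2 * cos x - cos (3 * x) / 2 := by
    rw [sin_three_mul, cos_three_mul]
    have h1 : sin x ^ 2 = 1 - cos x ^ 2 := by linarith [sin_sq_add_cos_sq x]
    have h3 : sin x ^ 3 = sin x * (1 - cos x ^ 2) := by rw [← h1]; ring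
    rw [h3, h1]
    ring
  rw [id]
  have a1 : 0 ≤ x / 4 - x ^ 3 / 30 := by nlinarith
  have a2 : 0 ≤ x ^ 3 / 90 + x / 4 := by positivity
  norm_num [sinTaylor, cosTaylor, Finset.sum_range_succ, Nat.factorial] at hs hs3 hcl hcu hc3
  have b1 := mul_le_mul_of_nonneg_left hs a1
  have b2 := mul_le_mul_of_nonneg_left hs3 a2
  have b3 := mul_le_mul_of_nonneg_left hcu (sq_nonneg x)
  have hx8 : 0 < x ^ 8 := by positivity
  have t0 : 0 ≤ x ^ 2 := sq_nonneg x
  have p2 : (x ^ 2) ^ 2 ≤ (5 / 2) ^ 2 := pow_le_pow_left₀ t0 ht.le 2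
  have p3 : (x ^ 2) ^ 3 ≤ (5 / 2) ^ 3 := pow_le_pow_left₀ t0 ht.le 3
  have p4 : (x ^ 2) ^ 4 ≤ (5 / 2) ^ 4 := pow_le_pow_left₀ t0 ht.le 4
  have q1 := mul_le_mul_of_nonneg_left ht.le hx8.le
  have q2 := mul_le_mul_of_nonneg_left p2 hx8.le
  have q3 := mul_le_mul_of_nonneg_left p3 hx8.le
  have q4 := mul_le_mul_of_nonneg_left p4 hx8.le
  ring_nf at *
  linarith

theorem stmt_16 (x : ℝ) (hx0 : 0 < x) (hx : x < π / 2) :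
    (x / sin x) ^ 2 + x / tan x < 2 + (2 / 45) * x ^ 3 * tan x := by
  have hs : 0 < sin x := sin_pos_of_pos_of_lt_pi hx0 (by linarith [pi_pos])
  have hc : 0 < cos x := cos_pos_of_mem_Ioo ⟨by linarith, hx⟩
  have h := cleared_pos x hx0 hx
  rw [tan_eq_sin_div_cos, ← sub_pos]
  have e : 2 + 2 / 45 * x ^ 3 * (sin x / cos x) - ((x / sin x) ^ 2 + x / (sin x / cos x)) =
      (2 / 45 * x ^ 3 * sin x ^ 3 + 2 * sin x ^ 2 * cos x - x ^ 2 * cos x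
        - x * cos x ^ 2 * sin x) / (sin x ^ 2 * cos x) := by
    field_simp
    ring
  rw [e]
  positivity
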